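/- Let α ∈ (0,1), λ ≥ 0 and ξ ∈ ℝ. Then, with z^α the principal branch of the complex power, (λ + iξ)^α + (λ − iξ)^α − 2λ^α = (α/Γ(1−α)) · ∫₀^∞ 4·sin²(ξy/2) · e^{−λy} · y^{−α−1} dy. In particular (λ + iξ)^α + (λ − iξ)^α − 2λ^α is a nonnegative real number, and it is strictly positive whenever ξ ≠ 0. -/

import Mathlib

open Complex MeasureTheory

/-!
For `-1 < re s < 0` and `0 ≤ re z` the Mellin transform of `y ↦ e^{-zy} - 1` at `s` is
`Γ(s) z^{-s}`: at `z = 1` this is an integration by parts, scaling gives every real `z > 0`, the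
identity theorem the open half-plane, and dominated convergence its boundary. Since
`4 sin²(ξy/2) e^{-λy} = 2e^{-λy} - e^{-(λ+iξ)y} - e^{-(λ-iξ)y}`, the symbol is a combination of
three such transforms at `s = -α`, with the constant `-Γ(-α) = Γ(1-α)/α`.
-/

open Asymptotics Filter Set Topology

lemma integrableOn_rpow_mul_min_one {σ : ℝ} (hσ : -1 < σ) (hσ' : σ < 0) :
    IntegrableOn (fun y : ℝ ↦ y ^ (σ - 1) * min y 1) (Ioi 0) := by
  refine mellin_convergent_of_isBigO_scalar (a := 0) (b := -1) ?_ ?_ hσ' ?_ hσ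
  · exact (by fun_prop : Continuous fun y : ℝ ↦ min y 1).locallyIntegrable.locallyIntegrableOn _
  · refine IsBigO.of_bound 1 ?_
    filter_upwards [eventually_ge_atTop 1] with y hy
    simp [min_eq_right hy]
  · refine IsBigO.of_bound 1 ?_
    filter_upwards [Ioo_mem_nhdsGT one_pos] with y hy
    simp [min_eq_left hy.2.le]

lemma setIntegral_pos_of_continuousOn_of_isOpen {X : Type*} [TopologicalSpace X]
    [MeasurableSpace X] [OpensMeasurableSpace X] {μ : Measure X} [μ.IsOpenPosMeasure]
    {U : Set X} {f : X → ℝ} (hU : IsOpen U) (hf : ContinuousOn f U) (hfi : IntegrableOn f U μ)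
    (hf0 : ∀ x ∈ U, 0 ≤ f x) {x : X} (hxU : x ∈ U) (hx : f x ≠ 0) : 0 < ∫ x in U, f x ∂μ := by
  have hae : 0 ≤ᵐ[μ.restrict U] f := (ae_restrict_mem hU.measurableSet).mono hf0
  have hopen : IsOpen (Function.support f ∩ U) := by
    rw [inter_comm]
    exact hf.isOpen_inter_preimage hU isOpen_compl_singleton
  rw [setIntegral_pos_iff_support_of_nonneg_ae hae hfi]
  exact hopen.measure_pos μ ⟨x, hx, hxU⟩

lemma cpow_smul_ofReal {y : ℝ} (hy : 0 ≤ y) (σ x : ℝ) :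
    (y : ℂ) ^ ((σ : ℂ) - 1) • (x : ℂ) = ((x * y ^ (σ - 1) : ℝ) : ℂ) := by
  push_cast [ofReal_cpow hy]
  rw [smul_eq_mul, mul_comm]

lemma mellinConvergent_ofReal_iff {f : ℝ → ℝ} {σ : ℝ} :
    MellinConvergent (fun y ↦ (f y : ℂ)) σ ↔ IntegrableOn (fun y ↦ f y * y ^ (σ - 1)) (Ioi 0) := by
  have hcongr : EqOn (fun y : ℝ ↦ (y : ℂ) ^ ((σ : ℂ) - 1) • (f y : ℂ))
      (fun y ↦ ((f y * y ^ (σ - 1) : ℝ) : ℂ)) (Ioi 0) :=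
    fun y (hy : 0 < y) ↦ cpow_smul_ofReal hy.le σ (f y)
  rw [MellinConvergent, integrableOn_congr_fun hcongr measurableSet_Ioi]
  exact ⟨fun h ↦ h.re, fun h ↦ h.ofReal⟩

lemma mellin_ofReal (f : ℝ → ℝ) (σ : ℝ) :
    mellin (fun y ↦ (f y : ℂ)) σ = ((∫ y in Ioi 0, f y * y ^ (σ - 1) : ℝ) : ℂ) := by
  rw [← integral_complex_ofReal]
  exact setIntegral_congr_fun measurableSet_Ioi fun y (hy : 0 < y) ↦ cpow_smul_ofReal hy.le σ (f y)

lemma setIntegral_sin_sq_mul_exp_neg_mul_rpow_pos {ξ l p : ℝ} (hξ : ξ ≠ 0)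
    (hint : IntegrableOn
      (fun y ↦ 4 * Real.sin (ξ * y / 2) ^ 2 * Real.exp (-(l * y)) * y ^ p) (Ioi 0)) :
    0 < ∫ y in Ioi (0 : ℝ), 4 * Real.sin (ξ * y / 2) ^ 2 * Real.exp (-(l * y)) * y ^ p := by
  have hπ : 0 < Real.pi / |ξ| := div_pos Real.pi_pos (abs_pos.2 hξ)
  refine setIntegral_pos_of_continuousOn_of_isOpen isOpen_Ioi ?_ hint ?_ hπ ?_
  · exact ContinuousOn.mul (by fun_prop) fun y (hy : 0 < y) ↦
      (Real.continuousAt_rpow_const y p (.inl hy.ne')).continuousWithinAt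
  · intro y (hy : 0 < y)
    positivity
  · have hsin : Real.sin (ξ * (Real.pi / |ξ|) / 2) ≠ 0 := by
      rcases hξ.lt_or_gt with h | h
      · rw [abs_of_neg h, show ξ * (Real.pi / -ξ) / 2 = -(Real.pi / 2) by field_simp]
        simp
      · rw [abs_of_pos h, mul_div_cancel₀ _ hξ]
        simp
    positivity

lemma eqOn_of_isPreconnected_of_frequently_eq_ofReal {E : Type*} [NormedAddCommGroup E]
    [NormedSpace ℂ E] [CompleteSpace E] {f g : ℂ → E} {U : Set ℂ} {x : ℝ}
    (hU : IsOpen U) (hUc : IsPreconnected U)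
    (hf : DifferentiableOn ℂ f U) (hg : DifferentiableOn ℂ g U)
    (hx : (x : ℂ) ∈ U) (hfg : ∃ᶠ t : ℝ in 𝓝[≠] x, f t = g t) : EqOn f g U := by
  have hcoe : Tendsto ((↑) : ℝ → ℂ) (𝓝[≠] x) (𝓝[≠] (x : ℂ)) :=
    continuous_ofReal.continuousWithinAt.tendsto_nhdsWithin fun t ht ↦ by simpa using ht
  exact (hf.analyticOnNhd hU).eqOn_of_preconnected_of_frequently_eq (hg.analyticOnNhd hU) hUc hx
    (hcoe.frequently hfg)

section Mellin

variable {s z w : ℂ}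

lemma norm_exp_neg_sub_one_le (hw : 0 ≤ w.re) : ‖cexp (-w) - 1‖ ≤ 2 * min ‖w‖ 1 := by
  rcases le_total ‖w‖ 1 with h | h
  · simpa [min_eq_left h] using norm_exp_sub_one_le (x := -w) (by simpa using h)
  · calc ‖cexp (-w) - 1‖ ≤ ‖cexp (-w)‖ + ‖(1 : ℂ)‖ := norm_sub_le _ _
      _ ≤ 1 + 1 := by gcongr <;> simp [norm_exp, hw]
      _ = 2 * min ‖w‖ 1 := by rw [min_eq_right h]; norm_num

lemma norm_exp_neg_mul_sub_one_le (hz : 0 ≤ z.re) {y : ℝ} (hy : 0 ≤ y) :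
    ‖cexp (-(z * y)) - 1‖ ≤ 2 * max ‖z‖ 1 * min y 1 := by
  have hmin : min (‖z‖ * y) 1 ≤ max ‖z‖ 1 * min y 1 := by
    rw [mul_min_of_nonneg _ _ (by positivity)]
    gcongr
    · exact le_max_left _ _
    · simp
  calc ‖cexp (-(z * y)) - 1‖ ≤ 2 * min ‖z * y‖ 1 :=
        norm_exp_neg_sub_one_le (by simpa using mul_nonneg hz hy)
    _ = 2 * min (‖z‖ * y) 1 := by rw [norm_mul, norm_real, Real.norm_of_nonneg hy]
    _ ≤ 2 * max ‖z‖ 1 * min y 1 := by linarith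

lemma norm_cpow_smul_exp_neg_mul_sub_one_le (s : ℂ) (hz : 0 ≤ z.re) {y : ℝ} (hy : 0 < y) :
    ‖(y : ℂ) ^ (s - 1) • (cexp (-(z * y)) - 1)‖ ≤
      2 * max ‖z‖ 1 * (y ^ (s.re - 1) * min y 1) := by
  rw [norm_smul, norm_cpow_eq_rpow_re_of_pos hy, sub_re, one_re]
  calc y ^ (s.re - 1) * ‖cexp (-(z * y)) - 1‖ ≤ y ^ (s.re - 1) * (2 * max ‖z‖ 1 * min y 1) := by
        gcongr; exact norm_exp_neg_mul_sub_one_le hz hy.le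
    _ = 2 * max ‖z‖ 1 * (y ^ (s.re - 1) * min y 1) := by ring

lemma aestronglyMeasurable_cpow_smul_exp_neg_mul_sub_one (s z : ℂ) :
    AEStronglyMeasurable (fun y : ℝ ↦ (y : ℂ) ^ (s - 1) • (cexp (-(z * y)) - 1))
      (volume.restrict (Ioi 0)) :=
  (by fun_prop : Measurable _).aestronglyMeasurable

lemma mellinConvergent_exp_neg_mul_sub_one (hs : -1 < s.re) (hs' : s.re < 0) (hz : 0 ≤ z.re) :
    MellinConvergent (fun y : ℝ ↦ cexp (-(z * y)) - 1) s := by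
  refine ((integrableOn_rpow_mul_min_one hs hs').const_mul (2 * max ‖z‖ 1)).mono'
    (aestronglyMeasurable_cpow_smul_exp_neg_mul_sub_one s z) ?_
  filter_upwards [ae_restrict_mem measurableSet_Ioi] with y hy
  exact norm_cpow_smul_exp_neg_mul_sub_one_le s hz hy

lemma continuousOn_mellin_exp_neg_mul_sub_one (hs : -1 < s.re) (hs' : s.re < 0) :
    ContinuousOn (fun z : ℂ ↦ mellin (fun y : ℝ ↦ cexp (-(z * y)) - 1) s) {z | 0 ≤ z.re} := by
  intro z _
  refine continuousWithinAt_of_dominated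
    (bound := fun y ↦ 2 * (‖z‖ + 1) * (y ^ (s.re - 1) * min y 1))
    (.of_forall (aestronglyMeasurable_cpow_smul_exp_neg_mul_sub_one s)) ?_
    ((integrableOn_rpow_mul_min_one hs hs').const_mul _)
    (.of_forall fun y ↦ Continuous.continuousWithinAt (by fun_prop))
  have hnear : ∀ᶠ w in 𝓝[{z | 0 ≤ z.re}] z, ‖w‖ < ‖z‖ + 1 :=
    continuous_norm.continuousWithinAt.eventually_lt continuousWithinAt_const (by simp)
  filter_upwards [hnear, self_mem_nhdsWithin] with w hw hw0
  filter_upwards [ae_restrict_mem measurableSet_Ioi] with y (hy : 0 < y)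
  refine (norm_cpow_smul_exp_neg_mul_sub_one_le s hw0 hy).trans ?_
  gcongr
  exact max_le hw.le (by simp)

lemma norm_cpow_smul_mul_exp_neg_mul (s z : ℂ) {y : ℝ} (hy : 0 < y) :
    ‖(y : ℂ) ^ (s - 1) • -(y * cexp (-(z * y)))‖ = y ^ s.re * Real.exp (-z.re * y) := by
  have hpow : y ^ (s.re - 1) * y = y ^ s.re := by
    rw [Real.rpow_sub_one hy.ne', div_mul_cancel₀ _ hy.ne']
  rw [norm_smul, norm_neg, norm_mul, norm_cpow_eq_rpow_re_of_pos hy, norm_real,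
    Real.norm_of_nonneg hy.le, norm_exp, ← mul_assoc, sub_re, one_re, hpow]
  simp

lemma hasDerivAt_mellin_exp_neg_mul_sub_one (hs : -1 < s.re) (hs' : s.re < 0) (hz : 0 < z.re) :
    HasDerivAt (fun z : ℂ ↦ mellin (fun y : ℝ ↦ cexp (-(z * y)) - 1) s)
      (mellin (fun y : ℝ ↦ -(y * cexp (-(z * y)))) s) z := by
  have hnhds : {w : ℂ | z.re / 2 < w.re} ∈ 𝓝 z :=
    (isOpen_lt continuous_const continuous_re).mem_nhds (half_lt_self hz)
  have hbound : IntegrableOn (fun y : ℝ ↦ y ^ s.re * Real.exp (-(z.re / 2) * y)) (Ioi 0) := by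
    simpa using integrableOn_rpow_mul_exp_neg_mul_rpow hs one_pos (half_pos hz)
  refine (hasDerivAt_integral_of_dominated_loc_of_deriv_le
    (F' := fun w (y : ℝ) ↦ (y : ℂ) ^ (s - 1) • -(y * cexp (-(w * y)))) hnhds
    (.of_forall (aestronglyMeasurable_cpow_smul_exp_neg_mul_sub_one s))
    (mellinConvergent_exp_neg_mul_sub_one hs hs' hz.le)
    (by fun_prop : Measurable _).aestronglyMeasurable ?_ hbound ?_).2
  · filter_upwards [ae_restrict_mem measurableSet_Ioi] with y (hy : 0 < y) w (hw : z.re / 2 < w.re)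
    rw [norm_cpow_smul_mul_exp_neg_mul s w hy]
    gcongr
  · refine .of_forall fun y w _ ↦ HasDerivAt.fun_const_smul _ ?_
    simpa [mul_comm] using ((hasDerivAt_mul_const (x := w) (y : ℂ)).fun_neg.cexp).sub_const 1

lemma tendsto_exp_neg_sub_one_mul_cpow_nhdsGT_zero (hs : -1 < s.re) :
    Tendsto (fun y : ℝ ↦ (cexp (-y) - 1) * (y : ℂ) ^ s) (𝓝[>] 0) (𝓝 0) := by
  have hlim : Tendsto (fun y : ℝ ↦ 2 * y ^ (s.re + 1)) (𝓝[>] 0) (𝓝 0) := by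
    have := (Real.continuousAt_rpow_const 0 (s.re + 1) (.inr (by linarith))).tendsto.const_mul 2
    rw [Real.zero_rpow (by linarith), mul_zero] at this
    exact this.mono_left nhdsWithin_le_nhds
  refine squeeze_zero_norm' ?_ hlim
  filter_upwards [self_mem_nhdsWithin] with y (hy : 0 < y)
  have hexp : ‖cexp (-y) - 1‖ ≤ 2 * y :=
    (norm_exp_neg_sub_one_le (by simpa using hy.le)).trans (by simp [abs_of_pos hy])
  rw [norm_mul, norm_cpow_eq_rpow_re_of_pos hy, Real.rpow_add_one hy.ne']
  calc ‖cexp (-y) - 1‖ * y ^ s.re ≤ 2 * y * y ^ s.re := by gcongr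
    _ = 2 * (y ^ s.re * y) := by ring

lemma tendsto_exp_neg_sub_one_mul_cpow_atTop (hs : s.re < 0) :
    Tendsto (fun y : ℝ ↦ (cexp (-y) - 1) * (y : ℂ) ^ s) atTop (𝓝 0) := by
  have hlim : Tendsto (fun y : ℝ ↦ 2 * y ^ s.re) atTop (𝓝 0) := by
    simpa using (tendsto_rpow_neg_atTop (neg_pos.2 hs)).const_mul 2
  refine squeeze_zero_norm' ?_ hlim
  filter_upwards [eventually_gt_atTop 0] with y hy
  have hexp : ‖cexp (-y) - 1‖ ≤ 2 :=
    (norm_exp_neg_sub_one_le (by simpa using hy.le)).trans (by simp)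
  rw [norm_mul, norm_cpow_eq_rpow_re_of_pos hy]
  gcongr

lemma mellin_exp_neg_sub_one (hs : -1 < s.re) (hs' : s.re < 0) :
    mellin (fun y : ℝ ↦ cexp (-y) - 1) s = Gamma s := by
  have hs0 : s ≠ 0 := by rintro rfl; simp at hs'
  have hu (y : ℝ) : HasDerivAt (fun y : ℝ ↦ cexp (-y) - 1) (-cexp (-y)) y := by
    simpa using ((hasDerivAt_id (y : ℂ)).neg.cexp.sub_const 1).comp_ofReal
  have hv (y : ℝ) (hy : y ∈ Ioi 0) :
      HasDerivAt (fun y : ℝ ↦ (y : ℂ) ^ s / s) ((y : ℂ) ^ (s - 1)) y := by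
    simpa [hs0] using (hasDerivAt_ofReal_cpow_const (mem_Ioi.1 hy).ne' hs0).div_const s
  have huv' : IntegrableOn (fun y : ℝ ↦ (cexp (-y) - 1) * (y : ℂ) ^ (s - 1)) (Ioi 0) := by
    simpa [MellinConvergent, mul_comm] using
      mellinConvergent_exp_neg_mul_sub_one (z := 1) hs hs' (by simp)
  have hs1 : 0 < (s + 1).re := by simpa using neg_lt_iff_pos_add.1 hs
  have hGamma (y : ℝ) : -cexp (-y) * ((y : ℂ) ^ s / s) =
      -s⁻¹ * ((-y).exp * (y : ℂ) ^ (s + 1 - 1)) := by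
    push_cast [add_sub_cancel_right]
    ring
  have hu'v : IntegrableOn (fun y : ℝ ↦ -cexp (-y) * ((y : ℂ) ^ s / s)) (Ioi 0) := by
    simp only [hGamma]
    exact (GammaIntegral_convergent hs1).const_mul _
  have hzero := (tendsto_exp_neg_sub_one_mul_cpow_nhdsGT_zero hs).div_const s
  have htop := (tendsto_exp_neg_sub_one_mul_cpow_atTop hs').div_const s
  simp only [mul_div_assoc] at hzero htop
  calc mellin (fun y : ℝ ↦ cexp (-y) - 1) s
      = ∫ y in Ioi (0 : ℝ), (cexp (-y) - 1) * (y : ℂ) ^ (s - 1) := by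
        simp only [mellin, smul_eq_mul, mul_comm]
    _ = -∫ y in Ioi (0 : ℝ), -cexp (-y) * ((y : ℂ) ^ s / s) := by
        rw [integral_Ioi_mul_deriv_eq_deriv_mul (fun y _ ↦ hu y) hv huv' hu'v hzero htop]
        ring
    _ = s⁻¹ * Gamma (s + 1) := by
        simp only [hGamma]
        rw [integral_const_mul, Gamma_eq_integral hs1, GammaIntegral, neg_mul, neg_neg]
    _ = Gamma s := by rw [Gamma_add_one s hs0, inv_mul_cancel_left₀ hs0]

lemma mellin_exp_neg_ofReal_mul_sub_one (hs : -1 < s.re) (hs' : s.re < 0) {r : ℝ} (hr : 0 < r) :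
    mellin (fun y : ℝ ↦ cexp (-(r * y)) - 1) s = Gamma s * (r : ℂ) ^ (-s) := by
  simpa [mellin_exp_neg_sub_one hs hs', mul_comm] using
    mellin_comp_mul_left (fun y : ℝ ↦ cexp (-y) - 1) s hr

lemma eqOn_mellin_exp_neg_mul_sub_one (hs : -1 < s.re) (hs' : s.re < 0) :
    EqOn (fun z : ℂ ↦ mellin (fun y : ℝ ↦ cexp (-(z * y)) - 1) s) (fun z ↦ Gamma s * z ^ (-s))
      {z | 0 < z.re} := by
  have hpos : ∀ᶠ r : ℝ in 𝓝[≠] 1, 0 < r := eventually_nhdsWithin_of_eventually_nhds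
    (eventually_gt_nhds one_pos)
  refine eqOn_of_isPreconnected_of_frequently_eq_ofReal (x := 1)
    (isOpen_lt continuous_const continuous_re) (convex_halfSpace_re_gt 0).isPreconnected
    (fun z hz ↦ ?_) (fun z hz ↦ ?_) (by simp)
    (hpos.mono fun r hr ↦ mellin_exp_neg_ofReal_mul_sub_one hs hs' hr).frequently
  · exact (hasDerivAt_mellin_exp_neg_mul_sub_one hs hs' hz).differentiableAt.differentiableWithinAt
  · exact ((differentiableAt_id.cpow_const (.inl hz)).const_mul _).differentiableWithinAt

theorem hasMellin_exp_neg_mul_sub_one (hs : -1 < s.re) (hs' : s.re < 0) (hz : 0 ≤ z.re) :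
    HasMellin (fun y : ℝ ↦ cexp (-(z * y)) - 1) s (Gamma s * z ^ (-s)) := by
  have hcont : ContinuousOn (fun z : ℂ ↦ Gamma s * z ^ (-s)) {z | 0 ≤ z.re} :=
    continuousOn_const.mul fun z hz ↦
      (continuousAt_cpow_const_of_re_pos (.inl hz) (by simpa using hs')).continuousWithinAt
  have heq := (eqOn_mellin_exp_neg_mul_sub_one hs hs').of_subset_closure
    (continuousOn_mellin_exp_neg_mul_sub_one hs hs') hcont (fun z (hz : 0 < z.re) ↦ hz.le)
    (closure_setOfPred_lt_re 0).ge
  exact ⟨mellinConvergent_exp_neg_mul_sub_one hs hs' hz, heq hz⟩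

lemma exp_neg_add_I_mul_add_exp_neg_sub_I_mul (a b : ℂ) :
    cexp (-(a + I * b)) + cexp (-(a - I * b)) - 2 * cexp (-a) =
      -(4 * sin (b / 2) ^ 2 * cexp (-a)) := by
  have hadd : cexp (-(a + I * b)) = cexp (-a) * cexp (-b * I) := by
    rw [← exp_add]
    ring_nf
  have hsub : cexp (-(a - I * b)) = cexp (-a) * cexp (b * I) := by
    rw [← exp_add]
    ring_nf
  have hcos : cexp (b * I) + cexp (-b * I) = 2 - 4 * sin (b / 2) ^ 2 := by
    rw [← two_cos, ← mul_div_cancel₀ b (two_ne_zero' ℂ), cos_two_mul, cos_sq']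
    ring_nf
  rw [hadd, hsub]
  linear_combination cexp (-a) * hcos

theorem hasMellin_sin_sq_mul_exp_neg_mul {l ξ : ℂ} (hs : -1 < s.re) (hs' : s.re < 0)
    (hξ : |ξ.im| ≤ l.re) :
    HasMellin (fun y : ℝ ↦ 4 * sin (ξ * y / 2) ^ 2 * cexp (-(l * y))) s
      (-Gamma s * ((l + I * ξ) ^ (-s) + (l - I * ξ) ^ (-s) - 2 * l ^ (-s))) := by
  obtain ⟨h₁, h₂⟩ := abs_le.1 hξ
  have hadd := hasMellin_exp_neg_mul_sub_one (z := l + I * ξ) hs hs' (by simpa using h₂)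
  have hsub := hasMellin_exp_neg_mul_sub_one (z := l - I * ξ) hs hs' (by simp; linarith)
  have hmid := hasMellin_exp_neg_mul_sub_one (z := l) hs hs' ((abs_nonneg _).trans hξ)
  have hsum := hasMellin_add hadd.1 hsub.1
  have hdbl := hasMellin_const_smul hmid.1 (2 : ℂ)
  have hneg := hasMellin_const_smul (hasMellin_sub hsum.1 hdbl.1).1 (-1 : ℂ)
  rw [(hasMellin_sub hsum.1 hdbl.1).2, hsum.2, hdbl.2, hadd.2, hsub.2, hmid.2] at hneg
  convert hneg using 1
  · funext y
    have hdiff := exp_neg_add_I_mul_add_exp_neg_sub_I_mul (l * y) (ξ * y)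
    simp only [add_mul, sub_mul, mul_assoc, smul_eq_mul] at hdiff ⊢
    linear_combination hdiff
  · simp only [smul_eq_mul]
    ring

end Mellin

/-- For `α ∈ (0,1)`, `λ ≥ 0` and `ξ ∈ ℝ`, with `z^α` the principal branch of the
complex power,
`(λ + iξ)^α + (λ − iξ)^α − 2λ^α = (α/Γ(1−α))·∫₀^∞ 4 sin²(ξy/2) e^{−λy} y^{−α−1} dy`;
in particular this quantity is a nonnegative real number, strictly positive for `ξ ≠ 0`. -/
theorem tempered_symbol_positivity_alpha_lt_one (α lam ξ : ℝ)
    (hα : α ∈ Set.Ioo (0:ℝ) 1) (hlam : 0 ≤ lam) :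
    ((lam : ℂ) + Complex.I * (ξ : ℂ)) ^ (α : ℂ)
        + ((lam : ℂ) - Complex.I * (ξ : ℂ)) ^ (α : ℂ) - 2 * (lam : ℂ) ^ (α : ℂ) =
      (((α / Real.Gamma (1 - α)) *
        ∫ y in Set.Ioi (0:ℝ), 4 * Real.sin (ξ*y/2)^2 * Real.exp (-(lam*y)) * y ^ (-α - 1) : ℝ) : ℂ) ∧
    0 ≤ (α / Real.Gamma (1 - α)) *
        ∫ y in Set.Ioi (0:ℝ), 4 * Real.sin (ξ*y/2)^2 * Real.exp (-(lam*y)) * y ^ (-α - 1) ∧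
    (ξ ≠ 0 → 0 < (α / Real.Gamma (1 - α)) *
        ∫ y in Set.Ioi (0:ℝ), 4 * Real.sin (ξ*y/2)^2 * Real.exp (-(lam*y)) * y ^ (-α - 1)) := by
  obtain ⟨hα0, hα1⟩ := hα
  have hΓ : 0 < Real.Gamma (1 - α) := Real.Gamma_pos_of_pos (sub_pos.2 hα1)
  have hcoef : α / Real.Gamma (1 - α) * -Real.Gamma (-α) = 1 := by
    have hrec := Real.Gamma_add_one (neg_ne_zero.2 hα0.ne')
    rw [neg_add_eq_sub] at hrec
    rw [div_mul_eq_mul_div, div_eq_one_iff_eq hΓ.ne', hrec, neg_mul, mul_neg]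
  have hmellin : HasMellin
      (fun y : ℝ ↦ ((4 * Real.sin (ξ * y / 2) ^ 2 * Real.exp (-(lam * y)) : ℝ) : ℂ)) ((-α : ℝ) : ℂ)
      (-Gamma (-α) * ((lam + I * ξ) ^ (α : ℂ) + (lam - I * ξ) ^ (α : ℂ) - 2 * lam ^ (α : ℂ))) := by
    simpa using hasMellin_sin_sq_mul_exp_neg_mul (s := -α) (l := lam) (ξ := ξ)
      (by simpa using hα1) (by simpa using hα0) (by simpa using hlam)
  refine ⟨?_, mul_nonneg (by positivity) ?_, fun hξ ↦ mul_pos (by positivity) ?_⟩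
  · rw [ofReal_mul, ← mellin_ofReal, hmellin.2, ← mul_assoc, ← ofReal_neg α, Gamma_ofReal,
      ← ofReal_neg, ← ofReal_mul, hcoef, ofReal_one, one_mul]
  · exact setIntegral_nonneg measurableSet_Ioi fun y (hy : 0 < y) ↦ by positivity
  · exact setIntegral_sin_sq_mul_exp_neg_mul_rpow_pos hξ (mellinConvergent_ofReal_iff.1 hmellin.1)
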